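/- (Induction step of the RPE recursion.) Let 0 < ξ ≤ 1, let j ≥ 1 be an integer, and let λ, a, θ' ∈ ℝ. Suppose ‖λ − θ'‖₀ < πξ/(3·2^{j−1}) and ‖2^j·λ − a‖₀ < πξ/3. Let S = {(2kπ + a)/2^j : k = 0, 1, …, 2^j − 1} and let θ ∈ S be any element satisfying ‖θ − θ'‖₀ ≤ ‖s − θ'‖₀ for all s ∈ S. Then ‖λ − θ‖₀ < πξ/(3·2^j). -/

import Mathlib

/-- The circular norm of `θ : ℝ`: the distance from `θ` to the nearest
integer multiple of `2π` (the norm of the image of `θ` in `ℝ/2πℤ`). -/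
noncomputable def circNorm (θ : ℝ) : ℝ := ‖(θ : Real.Angle)‖

theorem circNorm_exists (x : ℝ) : ∃ n : ℤ, circNorm x = |x - n * (2 * Real.pi)| :=
  ⟨_, AddCircle.norm_eq (2 * Real.pi) (x := x)⟩

theorem circNorm_le (x : ℝ) (n : ℤ) : circNorm x ≤ |x - n * (2 * Real.pi)| := by
  have h : ((x - n * (2 * Real.pi) : ℝ) : Real.Angle) = (x : Real.Angle) := by
    rw [Real.Angle.angle_eq_iff_two_pi_dvd_sub]
    exact ⟨-n, by push_cast; ring⟩
  unfold circNorm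
  rw [← h]
  exact QuotientAddGroup.norm_mk_le_norm (S := AddSubgroup.zmultiples (2 * Real.pi))

/-- Induction step of the RPE recursion: if `‖λ − θ'‖₀ < πξ/(3·2^{j−1})` and
`‖2^j λ − a‖₀ < πξ/3`, then any element `θ` of the candidate set
`S = {(2kπ + a)/2^j : k = 0, …, 2^j − 1}` minimizing the circular distance to `θ'`
satisfies `‖λ − θ‖₀ < πξ/(3·2^j)`. -/
theorem induction_step (ξ : ℝ) (hξ0 : 0 < ξ) (hξ1 : ξ ≤ 1) (j : ℕ) (hj : 1 ≤ j)
    (lam a θ' : ℝ)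
    (h1 : circNorm (lam - θ') < Real.pi * ξ / (3 * 2 ^ (j - 1)))
    (h2 : circNorm (2 ^ j * lam - a) < Real.pi * ξ / 3)
    (S : Set ℝ)
    (hS : S = {x : ℝ | ∃ k : ℕ, k < 2 ^ j ∧ x = (2 * k * Real.pi + a) / 2 ^ j})
    (θ : ℝ) (hθS : θ ∈ S)
    (hmin : ∀ s ∈ S, circNorm (θ - θ') ≤ circNorm (s - θ')) :
    circNorm (lam - θ) < Real.pi * ξ / (3 * 2 ^ j) := by
  have hpi := Real.pi_pos
  set N : ℝ := 2 ^ j with hN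
  have hNpos : 0 < N := by positivity
  have hpow : N = 2 * 2 ^ (j - 1) := by
    rw [hN, ← pow_succ', Nat.sub_add_cancel hj]
  set d : ℝ := Real.pi * ξ / (3 * N) with hd
  have hd1 : Real.pi * ξ / (3 * 2 ^ (j - 1)) = 2 * d := by
    rw [hd, hpow]; field_simp
  have hd2 : Real.pi * ξ / 3 = N * d := by
    rw [hd]; field_simp
  have hd3 : N * (3 * d) ≤ Real.pi := by
    have : N * (3 * d) = Real.pi * ξ := by rw [hd]; field_simp
    rw [this]; nlinarith
  rw [hd1] at h1
  rw [hd2] at h2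
  subst hS
  obtain ⟨l, hl, rfl⟩ := hθS
  obtain ⟨m, hm⟩ := circNorm_exists (N * lam - a)
  rw [hm] at h2
  have hNZ : (0 : ℤ) < 2 ^ j := by positivity
  have hk0 := Int.emod_nonneg m hNZ.ne'
  have hk1 := Int.emod_lt_of_pos m hNZ
  have hkq := Int.emod_add_mul_ediv m (2 ^ j)
  obtain ⟨k, hk⟩ := Int.eq_ofNat_of_zero_le hk0
  set q := m / 2 ^ j with hq
  rw [hk] at hk1 hkq
  have hkN : k < 2 ^ j := by exact_mod_cast hk1
  have hmR : (m : ℝ) = k + N * q := by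
    rw [← hkq, hN]; push_cast; ring
  have hs := hmin _ ⟨k, hkN, rfl⟩
  have hA : |lam - (2 * k * Real.pi + a) / N - q * (2 * Real.pi)| < d := by
    have : N * lam - a - m * (2 * Real.pi)
        = N * (lam - (2 * k * Real.pi + a) / N - q * (2 * Real.pi)) := by
      rw [hmR]; field_simp; ring
    rw [this, abs_mul, abs_of_pos hNpos] at h2
    exact lt_of_mul_lt_mul_left h2 hNpos.le
  obtain ⟨u, hu⟩ := circNorm_exists (lam - θ')
  rw [hu] at h1
  have hB := circNorm_le ((2 * k * Real.pi + a) / N - θ') (u - q)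
  obtain ⟨v, hv⟩ := circNorm_exists ((2 * l * Real.pi + a) / N - θ')
  rw [hv] at hs
  have hC := circNorm_le (lam - (2 * l * Real.pi + a) / N) (u - v)
  have hB' : |(2 * k * Real.pi + a) / N - θ' - ((u - q : ℤ) : ℝ) * (2 * Real.pi)| < 3 * d := by
    push_cast
    rw [abs_lt] at *
    constructor <;> linarith [hA.1, hA.2, h1.1, h1.2]
  have hD : |(2 * l * Real.pi + a) / N - θ' - v * (2 * Real.pi)| < 3 * d := by linarith
  -- the two candidates coincide modulo 2π
  have hE : |((l - k - 2 ^ j * (v - (u - q)) : ℤ) : ℝ) * (2 * Real.pi)| < N * (6 * d) := by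
    have e : ((l - k - 2 ^ j * (v - (u - q)) : ℤ) : ℝ) * (2 * Real.pi)
        = N * (((2 * l * Real.pi + a) / N - θ' - v * (2 * Real.pi))
          - ((2 * k * Real.pi + a) / N - θ' - ((u - q : ℤ) : ℝ) * (2 * Real.pi))) := by
      push_cast; rw [← hN]; field_simp; ring
    rw [e, abs_mul, abs_of_pos hNpos]
    apply mul_lt_mul_of_pos_left _ hNpos
    rw [abs_lt] at *
    constructor <;> linarith [hD.1, hD.2, hB'.1, hB'.2]
  have hz : (l - k - 2 ^ j * (v - (u - q)) : ℤ) = 0 := by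
    rw [← Int.abs_lt_one_iff]
    rw [abs_mul, abs_of_pos (by positivity : 0 < 2 * Real.pi)] at hE
    have h3 : |((l - k - 2 ^ j * (v - (u - q)) : ℤ) : ℝ)| < 1 := by
      by_contra hcon
      push Not at hcon
      nlinarith
    exact_mod_cast h3
  have hzR : (l : ℝ) = k + N * (v - (u - q)) := by
    have := congrArg (Int.cast : ℤ → ℝ) hz
    push_cast at this
    rw [← hN] at this
    linarith
  refine hC.trans_lt ?_
  have hfin : lam - (2 * l * Real.pi + a) / N - ((u - v : ℤ) : ℝ) * (2 * Real.pi)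
      = lam - (2 * k * Real.pi + a) / N - q * (2 * Real.pi) := by
    rw [hzR]; push_cast; field_simp; ring
  rw [hfin]
  exact hA
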